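/- Fix real α, β > −1, j ∈ ℕ, γ ∈ ℝ, M > 0, and a sequence M_n ≥ 0 with lim_{n→∞} M_n n^γ = M. If γ > 2(α+2j+1), then for every fixed k ∈ ℕ, lim_{n→∞} Q_n^{(k)}(1)/(P_n^{(α,β)})^{(k)}(1) = 1. -/

import Mathlib

open Polynomial Filter

/-- The Jacobi polynomial `P_n^{(α,β)}` as a real polynomial. -/
noncomputable def jacobiP (α β : ℝ) (n : ℕ) : Polynomial ℝ :=
  ∑ k ∈ Finset.range (n + 1),
    Polynomial.C (Real.Gamma (n + α + 1) / (Real.Gamma ((n : ℝ) - k + 1) * Real.Gamma (α + k + 1)) *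
        (Real.Gamma (n + β + 1) / (Real.Gamma ((k : ℝ) + 1) * Real.Gamma ((n : ℝ) - k + β + 1)))) *
      (Polynomial.C (2⁻¹ : ℝ) * (Polynomial.X - 1)) ^ k *
      (Polynomial.C (2⁻¹ : ℝ) * (Polynomial.X + 1)) ^ (n - k)

/-- The squared Jacobi norm `‖P_n^{(α,β)}‖²`. -/
noncomputable def jacobiNormSq (α β : ℝ) (n : ℕ) : ℝ :=
  ∫ x in (-1 : ℝ)..1, (jacobiP α β n).eval x ^ 2 * (1 - x) ^ α * (1 + x) ^ β

/-- The kernel `K_n^{(j,k)}(x,y)`. -/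
noncomputable def kernK (α β : ℝ) (j k n : ℕ) (x y : ℝ) : ℝ :=
  ∑ i ∈ Finset.range (n + 1),
    (Polynomial.derivative^[j] (jacobiP α β i)).eval x *
      (Polynomial.derivative^[k] (jacobiP α β i)).eval y / jacobiNormSq α β i

/-- The kernel `K_n^{(j,0)}(1,·)` as a polynomial. -/
noncomputable def kernKPoly (α β : ℝ) (j n : ℕ) : Polynomial ℝ :=
  ∑ i ∈ Finset.range (n + 1),
    Polynomial.C ((Polynomial.derivative^[j] (jacobiP α β i)).eval 1 / jacobiNormSq α β i) *
      jacobiP α β i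

/-- The varying Sobolev inner product `(f,g)_{S,n}` with mass `m`. -/
noncomputable def sobInner (α β : ℝ) (j : ℕ) (m : ℝ) (f g : Polynomial ℝ) : ℝ :=
  (∫ x in (-1 : ℝ)..1, f.eval x * g.eval x * (1 - x) ^ α * (1 + x) ^ β) +
    m * (Polynomial.derivative^[j] f).eval 1 * (Polynomial.derivative^[j] g).eval 1

/-- The Jacobi–Sobolev orthogonal polynomial `Q_n`. -/
noncomputable def sobQ (α β : ℝ) (j : ℕ) (Ms : ℕ → ℝ) (n : ℕ) : Polynomial ℝ :=
  jacobiP α β n -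
    Polynomial.C (Ms n * (Polynomial.derivative^[j] (jacobiP α β n)).eval 1 /
        (1 + Ms n * kernK α β j j (n - 1) 1 1)) *
      kernKPoly α β j (n - 1)

/-! The Taylor expansion of `P_n` at `1` is explicit: the Chu–Vandermonde identity collapses the
defining sum, so that `P_n^{(k)}(1)` is of exact order `n^(α + 2k)`. Against the weight, the moments
`∫ P_n (x - 1)^m` with `m ≤ n` are alternating sums of beta integrals, i.e. `n`-th finite
differences of a polynomial of degree `m`, so only `m = n` contributes and `‖P_n‖²` comes out in
closed form, of order `n⁻¹`. Summing, `K_{n-1}^{(j,k)}(1,1) = O(n^(2α + 2j + 2k + 2))`. Hence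
`P_n^{(j)}(1) K_{n-1}^{(j,k)}(1,1) / P_n^{(k)}(1)` and `K_{n-1}^{(j,j)}(1,1)` are both
`O(n^(2(α + 2j + 1)))`: multiplied by `M_n` they tend to `0`, and the correction term in `Q_n` is
negligible against `P_n`. -/

section

open Asymptotics MeasureTheory Real ProbabilityTheory Topology
open scoped Nat

/-! ### Power asymptotics of sums and Gamma quotients -/

theorem isBigO_sum_range {E : Type*} [NormedAddCommGroup E] {f : ℕ → E} {g : ℕ → ℝ}
    (hfg : f =O[atTop] g) (hg : 0 ≤ g)
    (hg' : Tendsto (fun n ↦ ∑ i ∈ Finset.range n, g i) atTop atTop) :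
    (fun n ↦ ∑ i ∈ Finset.range n, f i) =O[atTop] fun n ↦ ∑ i ∈ Finset.range n, g i := by
  obtain ⟨C, hC, hfC⟩ := hfg.exists_nonneg
  obtain ⟨N, hN⟩ := eventually_atTop.1 hfC.bound
  have hhead : (fun _ : ℕ ↦ ∑ i ∈ Finset.range N, f i) =O[atTop]
      fun n ↦ ∑ i ∈ Finset.range n, g i :=
    (isLittleO_const_left.2 (.inr (tendsto_norm_atTop_atTop.comp hg'))).isBigO
  have htail : (fun n ↦ ∑ i ∈ Finset.Ico N n, f i) =O[atTop]
      fun n ↦ ∑ i ∈ Finset.range n, g i := by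
    refine .of_bound C (.of_forall fun n ↦ ?_)
    calc ‖∑ i ∈ Finset.Ico N n, f i‖ ≤ ∑ i ∈ Finset.Ico N n, C * g i :=
          norm_sum_le_of_le _ fun i hi ↦ by
            simpa only [norm_of_nonneg (hg i)] using hN i (Finset.mem_Ico.1 hi).1
      _ ≤ ∑ i ∈ Finset.range n, C * g i :=
          Finset.sum_le_sum_of_subset_of_nonneg
            (fun i hi ↦ Finset.mem_range.2 (Finset.mem_Ico.1 hi).2)
            fun i _ _ ↦ mul_nonneg hC (hg i)
      _ = C * ‖∑ i ∈ Finset.range n, g i‖ := by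
          rw [← Finset.mul_sum, norm_of_nonneg (Finset.sum_nonneg fun i _ ↦ hg i)]
  refine (hhead.add htail).congr' ?_ .rfl
  filter_upwards [eventually_ge_atTop N] with n hn using Finset.sum_range_add_sum_Ico _ hn

theorem isEquivalent_add_one_rpow_sub_rpow {p : ℝ} (hp : p ≠ 0) :
    (fun n : ℕ ↦ (n + 1 : ℝ) ^ p - (n : ℝ) ^ p) ~[atTop] fun n ↦ p * (n : ℝ) ^ (p - 1) := by
  have hderiv : HasDerivAt (fun x : ℝ ↦ x ^ p) p 1 := by
    simpa using hasDerivAt_rpow_const (x := 1) (p := p) (.inl one_ne_zero)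
  have hlin : (fun n : ℕ ↦ (1 + (n : ℝ)⁻¹) ^ p - 1) ~[atTop] fun n ↦ p * (n : ℝ)⁻¹ := by
    have h := (hasDerivAt_iff_isLittleO_nhds_zero.1 hderiv).comp_tendsto
      tendsto_inv_atTop_nhds_zero_nat
    refine IsLittleO.isEquivalent ((isLittleO_const_mul_right_iff hp).2 (h.congr_left fun n ↦ ?_))
    simp [mul_comm]
  refine ((IsEquivalent.refl (u := fun n : ℕ ↦ (n : ℝ) ^ p)).mul hlin).congr_left ?_
    |>.congr_right ?_
  · filter_upwards [eventually_gt_atTop 0] with n hn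
    have hn : (0 : ℝ) < n := Nat.cast_pos.2 hn
    rw [Pi.mul_apply, mul_sub, ← Real.mul_rpow hn.le (by positivity), mul_add,
      mul_inv_cancel₀ hn.ne', mul_one, mul_one]
  · filter_upwards [eventually_gt_atTop 0] with n hn
    rw [Pi.mul_apply, rpow_sub_one (Nat.cast_ne_zero.2 hn.ne')]
    ring

theorem isBigO_sum_range_rpow {E : Type*} [NormedAddCommGroup E] {f : ℕ → E} {s : ℝ}
    (hs : -1 < s) (hf : f =O[atTop] fun n ↦ (n : ℝ) ^ s) :
    (fun n ↦ ∑ i ∈ Finset.range n, f i) =O[atTop] fun n ↦ (n : ℝ) ^ (s + 1) := by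
  have hp : 0 < s + 1 := by linarith
  have htelescope (n : ℕ) : ∑ i ∈ Finset.range n, ((i + 1 : ℝ) ^ (s + 1) - (i : ℝ) ^ (s + 1)) =
      (n : ℝ) ^ (s + 1) := by
    simpa [Real.zero_rpow hp.ne'] using
      Finset.sum_range_sub (fun i : ℕ ↦ (i : ℝ) ^ (s + 1)) n
  have hincr : (fun n : ℕ ↦ (n : ℝ) ^ s) =O[atTop]
      fun n : ℕ ↦ (n + 1 : ℝ) ^ (s + 1) - (n : ℝ) ^ (s + 1) := by
    simpa only [add_sub_cancel_right, isBigO_const_mul_left_iff hp.ne'] using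
      (isEquivalent_add_one_rpow_sub_rpow hp.ne').isBigO_symm
  simpa only [htelescope] using isBigO_sum_range (hf.trans hincr)
    (fun n ↦ sub_nonneg.2 (rpow_le_rpow (by positivity) (by linarith) hp.le))
    (by simpa only [htelescope, Function.comp_def] using
      (tendsto_rpow_atTop hp).comp tendsto_natCast_atTop_atTop)

theorem tendsto_mul_rpow_zero_of_lt {u : ℕ → ℝ} {M γ s : ℝ}
    (hu : Tendsto (fun n : ℕ ↦ u n * (n : ℝ) ^ γ) atTop (𝓝 M)) (hs : s < γ) :
    Tendsto (fun n : ℕ ↦ u n * (n : ℝ) ^ s) atTop (𝓝 0) := by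
  have hpow : Tendsto (fun n : ℕ ↦ (n : ℝ) ^ (-(γ - s))) atTop (𝓝 0) :=
    (tendsto_rpow_neg_atTop (sub_pos.2 hs)).comp tendsto_natCast_atTop_atTop
  have hmul := hu.mul hpow
  rw [mul_zero] at hmul
  refine hmul.congr' ?_
  filter_upwards [eventually_gt_atTop 0] with n hn
  rw [mul_assoc, ← rpow_add (Nat.cast_pos.2 hn), neg_sub, add_sub_cancel]

theorem ne_neg_natCast_of_pos {s : ℝ} (hs : 0 < s) (k : ℕ) : s ≠ -k :=
  ((neg_nonpos.2 k.cast_nonneg).trans_lt hs).ne'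

theorem Gamma_add_natCast {s : ℝ} (hs : ∀ k : ℕ, s ≠ -k) (n : ℕ) :
    Gamma (s + n) = (ascPochhammer ℝ n).eval s * Gamma s := by
  induction n with
  | zero => simp
  | succ n ih =>
    have hn : s + n ≠ 0 := fun h ↦ hs n (eq_neg_of_add_eq_zero_left h)
    rw [Nat.cast_succ, ← add_assoc, Gamma_add_one hn, ih, ascPochhammer_succ_eval]
    ring

theorem Gamma_div_factorial_isEquivalent (s : ℝ) :
    (fun n : ℕ ↦ Gamma (n + s + 1) / n !) ~[atTop] fun n ↦ (n : ℝ) ^ s := by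
  by_cases hs : ∀ k : ℕ, s ≠ -k
  · have hΓ := Gamma_ne_zero hs
    have hlim : Tendsto ((fun _ ↦ Gamma s) / GammaSeq s) atTop (𝓝 (Gamma s / Gamma s)) :=
      tendsto_const_nhds.div (GammaSeq_tendsto_Gamma s) hΓ
    rw [div_self hΓ] at hlim
    have hprod (m : ℕ) : (ascPochhammer ℝ m).eval s = ∏ j ∈ Finset.range m, (s + j) := by
      induction m with
      | zero => simp
      | succ m ih => rw [ascPochhammer_succ_eval, ih, Finset.prod_range_succ]
    refine isEquivalent_of_tendsto_one (hlim.congr fun n ↦ ?_)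
    rw [Pi.div_apply, Pi.div_apply, show (n : ℝ) + s + 1 = s + (n + 1 : ℕ) by push_cast; ring,
      Gamma_add_natCast hs, hprod, GammaSeq, div_div_eq_mul_div,
      div_div, mul_comm (Gamma s), mul_comm (_ ^ s)]
  · push Not at hs
    obtain ⟨k, rfl⟩ := hs
    refine (isEquivalent_descFactorial k).inv.congr_left ?_ |>.congr_right (.of_forall fun n ↦ ?_)
    · filter_upwards [eventually_ge_atTop k] with n hn
      rw [Pi.inv_apply, ← sub_eq_add_neg, ← Nat.cast_sub hn, Gamma_nat_eq_factorial,
        ← Nat.factorial_mul_descFactorial hn, Nat.cast_mul]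
      field_simp
    · simp only [Pi.inv_apply, rpow_neg n.cast_nonneg, rpow_natCast]

theorem descPochhammer_eval_mul_Gamma {x : ℝ} {m : ℕ} (hx : ∀ k : ℕ, x - m + 1 ≠ -k) :
    (descPochhammer ℝ m).eval x * Gamma (x - m + 1) = Gamma (x + 1) := by
  rw [descPochhammer_eval_eq_ascPochhammer, ← Gamma_add_natCast hx]
  congr 1
  ring

theorem descPochhammer_eval_add {R : Type*} [CommRing R] (x y : R) (n : ℕ) :
    (descPochhammer R n).eval (x + y) = ∑ i ∈ Finset.range (n + 1),
      n.choose i * (descPochhammer R i).eval x * (descPochhammer R (n - i)).eval y := by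
  have hsmeval (z : R) (k : ℕ) : (descPochhammer ℤ k).smeval z = (descPochhammer R k).eval z := by
    rw [← aeval_eq_smeval, ← descPochhammer_map (Int.castRingHom R), eval_map, aeval_def]
    rfl
  simpa only [hsmeval, Finset.Nat.sum_antidiagonal_eq_sum_range_succ_mk, mul_assoc] using
    Ring.descPochhammer_smeval_add n (Commute.all x y)

theorem sum_neg_one_pow_mul_choose_mul_eval {R : Type*} [CommRing R] {p : R[X]} {n : ℕ}
    (hp : p.natDegree ≤ n) (y : R) :
    ∑ k ∈ Finset.range (n + 1), (-1) ^ k * (n.choose k : R) * p.eval (y + k) =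
      (-1) ^ n * n ! * p.coeff n := by
  have hΔ : (fwdDiff 1)^[n] p.eval y = n ! * p.coeff n := by
    rcases hp.lt_or_eq with hlt | rfl
    · rw [fwdDiff_iter_eq_zero_of_degree_lt hlt, coeff_eq_zero_of_natDegree_lt hlt,
        mul_zero, Pi.zero_apply]
    · simp [fwdDiff_iter_degree_eq_factorial, mul_comm]
  rw [mul_assoc, ← hΔ, fwdDiff_iter_eq_sum_shift, Finset.mul_sum]
  refine Finset.sum_congr rfl fun k hk ↦ ?_
  obtain ⟨d, rfl⟩ := Nat.exists_eq_add_of_le (Finset.mem_range_succ_iff.1 hk)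
  have hsign : (-1 : R) ^ (k + d) * (-1) ^ d = (-1) ^ k := by
    rw [pow_add, mul_assoc, ← mul_pow]
    simp
  simp [zsmul_eq_mul, ← mul_assoc, hsign]

/-! ### The Jacobi weight -/

theorem ofReal_rpow_mul_one_sub_rpow {x : ℝ} (hx : x ∈ Set.Icc 0 1) (a b : ℝ) :
    ((x ^ a * (1 - x) ^ b : ℝ) : ℂ) = (x : ℂ) ^ (a : ℂ) * (1 - (x : ℂ)) ^ (b : ℂ) := by
  rw [Complex.ofReal_mul, Complex.ofReal_cpow hx.1, Complex.ofReal_cpow (sub_nonneg.2 hx.2),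
    Complex.ofReal_sub, Complex.ofReal_one]

theorem intervalIntegrable_rpow_mul_one_sub_rpow {a b : ℝ} (ha : -1 < a) (hb : -1 < b) :
    IntervalIntegrable (fun x : ℝ ↦ x ^ a * (1 - x) ^ b) volume 0 1 := by
  have h := Complex.betaIntegral_convergent (u := (a + 1 : ℝ)) (v := (b + 1 : ℝ))
    (by rw [Complex.ofReal_re]; linarith) (by rw [Complex.ofReal_re]; linarith)
  have hre : IntervalIntegrable (fun x : ℝ ↦ ((x ^ a * (1 - x) ^ b : ℝ) : ℂ)) volume 0 1 := by
    refine h.congr fun x hx ↦ ?_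
    rw [Set.uIoc_of_le zero_le_one] at hx
    simp only [ofReal_rpow_mul_one_sub_rpow ⟨hx.1.le, hx.2⟩, Complex.ofReal_add,
      Complex.ofReal_one, add_sub_cancel_right]
  exact ⟨hre.1.re, hre.2.re⟩

theorem integral_rpow_mul_one_sub_rpow {a b : ℝ} (ha : -1 < a) (hb : -1 < b) :
    ∫ x in (0 : ℝ)..1, x ^ a * (1 - x) ^ b = beta (a + 1) (b + 1) := by
  rw [beta_eq_betaIntegralReal _ _ (by linarith) (by linarith), Complex.betaIntegral,
    ← Complex.ofReal_re (∫ x in (0 : ℝ)..1, _), ← intervalIntegral.integral_ofReal]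
  congr 1
  refine intervalIntegral.integral_congr fun x hx ↦ ?_
  rw [Set.uIcc_of_le zero_le_one] at hx
  simp only [ofReal_rpow_mul_one_sub_rpow hx, Complex.ofReal_add, Complex.ofReal_one,
    add_sub_cancel_right]

/-- The weight `(1 - x)^α (1 + x)^β` on `[-1, 1]` for which the Jacobi polynomials are
orthogonal. -/
noncomputable def jacobiWeight (α β x : ℝ) : ℝ := (1 - x) ^ α * (1 + x) ^ β

variable {α β : ℝ}

theorem jacobiWeight_eq_comp {x : ℝ} (hx : x ∈ Set.Icc (-1) 1) :
    jacobiWeight α β x =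
      2 ^ (α + β) * ((x / 2 + 1 / 2) ^ β * (1 - (x / 2 + 1 / 2)) ^ α) := by
  rw [jacobiWeight, show 1 - x = 2 * (1 - (x / 2 + 1 / 2)) by ring,
    show 1 + x = 2 * (x / 2 + 1 / 2) by ring, mul_rpow zero_le_two (by linarith [hx.2]),
    mul_rpow zero_le_two (by linarith [hx.1]), rpow_add zero_lt_two]
  ring

theorem intervalIntegrable_jacobiWeight (hα : -1 < α) (hβ : -1 < β) :
    IntervalIntegrable (jacobiWeight α β) volume (-1) 1 := by
  have h := (((intervalIntegrable_rpow_mul_one_sub_rpow hβ hα).comp_add_right (1 / 2)).comp_mul_left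
    (c := 1 / 2)).const_mul (2 ^ (α + β))
  rw [show (0 - 1 / 2 : ℝ) / (1 / 2) = -1 by norm_num,
    show (1 - 1 / 2 : ℝ) / (1 / 2) = 1 by norm_num] at h
  refine h.congr fun x hx ↦ ?_
  rw [Set.uIoc_of_le (by norm_num)] at hx
  simp only [jacobiWeight_eq_comp ⟨hx.1.le, hx.2⟩]
  ring_nf

theorem integral_jacobiWeight (hα : -1 < α) (hβ : -1 < β) :
    ∫ x in (-1 : ℝ)..1, jacobiWeight α β x = 2 ^ (α + β + 1) * beta (α + 1) (β + 1) := by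
  have hcongr : ∫ x in (-1 : ℝ)..1, jacobiWeight α β x = ∫ x in (-1 : ℝ)..1,
      2 ^ (α + β) * ((x / 2 + 1 / 2) ^ β * (1 - (x / 2 + 1 / 2)) ^ α) :=
    intervalIntegral.integral_congr fun x hx ↦
      jacobiWeight_eq_comp (by rwa [Set.uIcc_of_le (by norm_num)] at hx)
  rw [hcongr, intervalIntegral.integral_const_mul,
    intervalIntegral.integral_comp_div_add (fun x : ℝ ↦ x ^ β * (1 - x) ^ α) two_ne_zero,
    show (-1 : ℝ) / 2 + 1 / 2 = 0 by norm_num, show (1 : ℝ) / 2 + 1 / 2 = 1 by norm_num,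
    integral_rpow_mul_one_sub_rpow hβ hα, rpow_add_one two_ne_zero, smul_eq_mul, beta, beta,
    add_comm (β + 1), mul_comm (Gamma (β + 1))]
  ring

theorem jacobiWeight_add_natCast (m k : ℕ) {x : ℝ} (hx : x ∈ Set.Ioo (-1) 1) :
    jacobiWeight (α + m) (β + k) x = (1 - x) ^ m * (1 + x) ^ k * jacobiWeight α β x := by
  rw [jacobiWeight, jacobiWeight, rpow_add_natCast (by linarith [hx.2]),
    rpow_add_natCast (by linarith [hx.1])]
  ring

theorem integral_one_sub_pow_mul_one_add_pow_mul_jacobiWeight (hα : -1 < α) (hβ : -1 < β)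
    (m k : ℕ) :
    ∫ x in (-1 : ℝ)..1, (1 - x) ^ m * (1 + x) ^ k * jacobiWeight α β x =
      2 ^ (α + β + 1 + (m + k : ℕ)) * beta (α + 1 + m) (β + 1 + k) := by
  calc ∫ x in (-1 : ℝ)..1, (1 - x) ^ m * (1 + x) ^ k * jacobiWeight α β x
      = ∫ x in (-1 : ℝ)..1, jacobiWeight (α + m) (β + k) x := by
        simp only [intervalIntegral.integral_of_le (show (-1 : ℝ) ≤ 1 by norm_num),
          integral_Ioc_eq_integral_Ioo]
        exact setIntegral_congr_fun measurableSet_Ioo fun x hx ↦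
          (jacobiWeight_add_natCast m k hx).symm
    _ = _ := by
        rw [integral_jacobiWeight (by linarith [m.cast_nonneg (α := ℝ)])
          (by linarith [k.cast_nonneg (α := ℝ)])]
        push_cast
        ring_nf

theorem intervalIntegrable_eval_mul_jacobiWeight (hα : -1 < α) (hβ : -1 < β) (p : ℝ[X]) :
    IntervalIntegrable (fun x ↦ p.eval x * jacobiWeight α β x) volume (-1) 1 :=
  (intervalIntegrable_jacobiWeight hα hβ).continuousOn_mul p.continuousOn

/-! ### Values of the derivatives at `1` -/

theorem jacobiP_eq_sum (α : ℝ) (hβ : -1 < β) (n : ℕ) :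
    jacobiP α β n = C (Gamma (n + α + 1) / n !) * ∑ k ∈ Finset.range (n + 1),
      C (n.choose k * (descPochhammer ℝ k).eval (n + β) / Gamma (α + k + 1)) *
        ((C 2⁻¹ * (X - 1)) ^ k * (C 2⁻¹ * (X + 1)) ^ (n - k)) := by
  rw [jacobiP, Finset.mul_sum]
  refine Finset.sum_congr rfl fun k hk ↦ ?_
  have hkn : k ≤ n := Finset.mem_range_succ_iff.1 hk
  have hpos : 0 < (n : ℝ) - k + β + 1 := by
    have : (k : ℝ) ≤ n := Nat.cast_le.2 hkn
    linarith
  rw [← mul_assoc, ← mul_assoc, ← C_mul]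
  congr 3
  rw [← descPochhammer_eval_mul_Gamma (x := n + β) (m := k)
      (ne_neg_natCast_of_pos (by linarith)), Nat.cast_choose ℝ hkn, ← Nat.cast_sub hkn,
    Gamma_nat_eq_factorial, Gamma_nat_eq_factorial, Nat.cast_sub hkn,
    show (n : ℝ) + β - k + 1 = n - k + β + 1 by ring]
  have := (Gamma_pos_of_pos hpos).ne'
  field_simp

theorem coeff_taylor_C_mul_X_sub_one_pow_mul (a : ℝ) (n i k : ℕ) :
    (taylor 1 (C a * ((C 2⁻¹ * (X - 1)) ^ i * (C 2⁻¹ * (X + 1)) ^ (n - i)))).coeff k =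
      a * ((if i ≤ k then ((n - i).choose (k - i) : ℝ) else 0) * 2⁻¹ ^ k) := by
  have hsub : taylor (1 : ℝ) (C 2⁻¹ * (X - 1)) = C 2⁻¹ * X := by
    simp only [taylor_mul, taylor_C, map_sub, taylor_X, taylor_one, C_1, add_sub_cancel_right]
  have hadd : taylor (1 : ℝ) (C 2⁻¹ * (X + 1)) = C 2⁻¹ * X + 1 := by
    have htwo : C (2⁻¹ : ℝ) * 2 = 1 := by
      rw [← C_ofNat, ← C_mul, inv_mul_cancel₀ two_ne_zero, C_1]
    simp only [taylor_mul, taylor_C, map_add, taylor_X, taylor_one, C_1]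
    linear_combination htwo
  have hscale : (C 2⁻¹ * X) ^ i * (C 2⁻¹ * X + 1) ^ (n - i) =
      (X ^ i * (X + 1) ^ (n - i) : ℝ[X]).comp (C 2⁻¹ * X) := by
    rw [mul_comp, pow_comp, pow_comp, X_comp, add_comp, X_comp, one_comp]
  rw [taylor_mul, taylor_C, coeff_C_mul, taylor_mul, taylor_pow, taylor_pow, hsub, hadd, hscale,
    comp_C_mul_X_coeff, coeff_X_pow_mul', coeff_X_add_one_pow]

theorem natDegree_jacobiP_le (α β : ℝ) (n : ℕ) : (jacobiP α β n).natDegree ≤ n := by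
  refine natDegree_sum_le_of_forall_le _ _ fun k hk ↦ ?_
  have hpow (c : ℝ) (m : ℕ) : ((C 2⁻¹ * (X + C c)) ^ m).natDegree ≤ m := by compute_degree
  rw [mul_assoc]
  refine (natDegree_C_mul_le _ _).trans ((natDegree_mul_le_of_le (m := k) (n := n - k)
    (by simpa only [C_neg, C_1, ← sub_eq_add_neg] using hpow (-1) k)
    (by simpa only [C_1] using hpow 1 (n - k))).trans
    (Nat.add_sub_of_le (Finset.mem_range_succ_iff.1 hk)).le)

theorem choose_div_Gamma_mul_choose_sub (hα : -1 < α) (n : ℕ) {i k : ℕ} (hik : i ≤ k) :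
    n.choose i / Gamma (α + i + 1) * (n - i).choose (k - i) =
      n.choose k / Gamma (α + k + 1) *
        (k.choose i * (descPochhammer ℝ (k - i)).eval (α + k)) := by
  have hchoose : (n.choose k * k.choose i : ℝ) = n.choose i * (n - i).choose (k - i) :=
    mod_cast Nat.choose_mul hik
  have hpos (l : ℕ) : 0 < α + l + 1 := by linarith [l.cast_nonneg (α := ℝ)]
  have hΓ := descPochhammer_eval_mul_Gamma (x := α + k) (m := k - i)
    (ne_neg_natCast_of_pos (by rw [Nat.cast_sub hik]; linarith [hpos i]))
  rw [Nat.cast_sub hik, add_sub_assoc, sub_sub_cancel] at hΓ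
  have hi := (Gamma_pos_of_pos (hpos i)).ne'
  have hk := (Gamma_pos_of_pos (hpos k)).ne'
  field_simp
  linear_combination -Gamma (α + k + 1) * hchoose - n.choose k * k.choose i * hΓ

theorem coeff_taylor_jacobiP (hα : -1 < α) (hβ : -1 < β) (n k : ℕ) :
    (taylor 1 (jacobiP α β n)).coeff k = Gamma (n + α + 1) / n ! * n.choose k *
      (ascPochhammer ℝ k).eval (n + α + β + 1) / (2 ^ k * Gamma (α + k + 1)) := by
  rcases lt_or_ge n k with hnk | hkn
  · rw [coeff_eq_zero_of_natDegree_lt (by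
      rw [natDegree_taylor]; exact (natDegree_jacobiP_le α β n).trans_lt hnk),
      Nat.choose_eq_zero_of_lt hnk]
    simp
  have hterm (i : ℕ) (hi : i ∈ Finset.range (k + 1)) :
      n.choose i * (descPochhammer ℝ i).eval (n + β) / Gamma (α + i + 1) *
        ((if i ≤ k then ((n - i).choose (k - i) : ℝ) else 0) * 2⁻¹ ^ k) =
      n.choose k / (2 ^ k * Gamma (α + k + 1)) * (k.choose i *
        (descPochhammer ℝ i).eval (n + β) * (descPochhammer ℝ (k - i)).eval (α + k)) := by
    have hik : i ≤ k := Finset.mem_range_succ_iff.1 hi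
    rw [if_pos hik, inv_pow]
    linear_combination (descPochhammer ℝ i).eval (n + β) / 2 ^ k *
      choose_div_Gamma_mul_choose_sub hα n hik
  have hvandermonde : (ascPochhammer ℝ k).eval (n + α + β + 1) =
      ∑ i ∈ Finset.range (k + 1), k.choose i * (descPochhammer ℝ i).eval (n + β) *
        (descPochhammer ℝ (k - i)).eval (α + k) := by
    rw [← descPochhammer_eval_add, descPochhammer_eval_eq_ascPochhammer]
    ring_nf
  rw [jacobiP_eq_sum α hβ, taylor_mul, taylor_C, coeff_C_mul, map_sum, finsetSum_coeff]
  simp only [coeff_taylor_C_mul_X_sub_one_pow_mul]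
  rw [← Finset.sum_subset (Finset.range_mono (Nat.succ_le_succ hkn)) fun i _ hi ↦ ?_,
    Finset.sum_congr rfl hterm, ← Finset.mul_sum, ← hvandermonde]
  · ring
  · rw [if_neg (by simpa [Nat.lt_succ_iff] using hi), zero_mul, mul_zero]

theorem iterate_derivative_jacobiP_eval_one (hα : -1 < α) (hβ : -1 < β) (n k : ℕ) :
    (derivative^[k] (jacobiP α β n)).eval 1 = Gamma (n + α + 1) / n ! * n.descFactorial k *
      (ascPochhammer ℝ k).eval (n + α + β + 1) / (2 ^ k * Gamma (α + k + 1)) := by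
  rw [← factorial_smul_hasseDeriv, LinearMap.smul_apply, eval_smul, ← taylor_coeff,
    coeff_taylor_jacobiP hα hβ, Nat.descFactorial_eq_factorial_mul_choose, nsmul_eq_mul,
    Nat.cast_mul]
  ring

theorem ascPochhammer_eval_natCast_add_isEquivalent (c : ℝ) (k : ℕ) :
    (fun n : ℕ ↦ (ascPochhammer ℝ k).eval (n + c)) ~[atTop] fun n ↦ (n : ℝ) ^ k := by
  have hlead := ((ascPochhammer ℝ k).comp (X + C c)).isEquivalent_atTop_lead.comp_tendsto
    tendsto_natCast_atTop_atTop
  simpa only [((monic_ascPochhammer ℝ k).comp_X_add_C c).leadingCoeff, natDegree_comp,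
    natDegree_X_add_C, ascPochhammer_natDegree, mul_one, one_mul, eval_comp, eval_add, eval_X,
    eval_C, Function.comp_def] using hlead

theorem iterate_derivative_jacobiP_eval_one_isEquivalent (hα : -1 < α) (hβ : -1 < β) (k : ℕ) :
    (fun n ↦ (derivative^[k] (jacobiP α β n)).eval 1) ~[atTop]
      fun n ↦ (2 ^ k * Gamma (α + k + 1))⁻¹ * (n : ℝ) ^ (α + 2 * k) := by
  refine (((Gamma_div_factorial_isEquivalent α).mul (isEquivalent_descFactorial k)).mul
    (ascPochhammer_eval_natCast_add_isEquivalent (α + β + 1) k)).mul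
    (IsEquivalent.refl (u := fun _ ↦ (2 ^ k * Gamma (α + k + 1))⁻¹))
    |>.congr_left (.of_forall fun n ↦ ?_) |>.congr_right ?_
  · simp only [Pi.mul_apply, iterate_derivative_jacobiP_eval_one hα hβ, div_eq_mul_inv,
      ← add_assoc]
  · filter_upwards [eventually_gt_atTop 0] with n hn
    simp only [Pi.mul_apply, two_mul, rpow_add (Nat.cast_pos.2 hn), rpow_natCast]
    ring

theorem iterate_derivative_jacobiP_eval_one_isTheta (hα : -1 < α) (hβ : -1 < β) (k : ℕ) :
    (fun n ↦ (derivative^[k] (jacobiP α β n)).eval 1) =Θ[atTop]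
      fun n ↦ (n : ℝ) ^ (α + 2 * k) := by
  have hpos : 0 < α + k + 1 := by linarith [k.cast_nonneg (α := ℝ)]
  exact (iterate_derivative_jacobiP_eval_one_isEquivalent hα hβ k).isTheta.trans
    ((isTheta_const_mul_left (by have := Gamma_pos_of_pos hpos; positivity)).2 (isTheta_refl _ _))

/-! ### Moments and the norm -/

theorem descPochhammer_eval_div_Gamma_mul_beta (hα : -1 < α) (hβ : -1 < β) {n k : ℕ} (m : ℕ)
    (hkn : k ≤ n) :
    (descPochhammer ℝ k).eval (n + β) / Gamma (α + k + 1) *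
        beta (α + 1 + (m + k : ℕ)) (β + 1 + (n - k : ℕ)) =
      Gamma (n + β + 1) / Gamma (n + α + β + 2 + m) *
        (ascPochhammer ℝ m).eval (α + 1 + k) := by
  have hk : (k : ℝ) ≤ n := Nat.cast_le.2 hkn
  have hα' : 0 < α + 1 + k := by linarith [k.cast_nonneg (α := ℝ)]
  have hβ' : 0 < β + 1 + (n - k) := by linarith
  have hasc : Gamma (α + 1 + (m + k : ℕ)) =
      (ascPochhammer ℝ m).eval (α + 1 + k) * Gamma (α + 1 + k) := by
    rw [← Gamma_add_natCast (ne_neg_natCast_of_pos hα'), Nat.cast_add]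
    ring_nf
  have hdesc : (descPochhammer ℝ k).eval (n + β) * Gamma (β + 1 + (n - k)) =
      Gamma (n + β + 1) := by
    rw [← descPochhammer_eval_mul_Gamma (x := n + β) (m := k)
      (ne_neg_natCast_of_pos (by linarith))]
    ring_nf
  have hsum : α + 1 + (m + k : ℕ) + (β + 1 + (n - k)) = n + α + β + 2 + m := by
    push_cast
    ring
  have hΓ := (Gamma_pos_of_pos hα').ne'
  rw [beta, Nat.cast_sub hkn, hsum, hasc, ← hdesc, add_right_comm α]
  field_simp

theorem integral_jacobiP_mul_X_sub_one_pow_eq_sum (hα : -1 < α) (hβ : -1 < β) (m n : ℕ) :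
    ∫ x in (-1 : ℝ)..1, (jacobiP α β n).eval x * (x - 1) ^ m * jacobiWeight α β x =
      Gamma (n + α + 1) / n ! * ∑ k ∈ Finset.range (n + 1),
        (-1) ^ m * 2 ^ (α + β + 1 + m) * ((-1) ^ k * n.choose k *
          ((descPochhammer ℝ k).eval (n + β) / Gamma (α + k + 1) *
            beta (α + 1 + (m + k : ℕ)) (β + 1 + (n - k : ℕ)))) := by
  have hexpand (x : ℝ) : (jacobiP α β n).eval x * (x - 1) ^ m * jacobiWeight α β x =
      Gamma (n + α + 1) / n ! * ∑ k ∈ Finset.range (n + 1),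
        n.choose k * (descPochhammer ℝ k).eval (n + β) / Gamma (α + k + 1) * (-1) ^ (m + k) *
          2⁻¹ ^ n * ((1 - x) ^ (m + k) * (1 + x) ^ (n - k) * jacobiWeight α β x) := by
    rw [jacobiP_eq_sum α hβ, eval_mul, eval_C, eval_finsetSum, mul_assoc, mul_assoc,
      Finset.sum_mul]
    congr 1
    refine Finset.sum_congr rfl fun k hk ↦ ?_
    simp only [eval_mul, eval_C, eval_pow, eval_sub, eval_add, eval_X, eval_one]
    rw [show (2⁻¹ : ℝ) ^ n = 2⁻¹ ^ k * 2⁻¹ ^ (n - k) by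
      rw [← pow_add, Nat.add_sub_of_le (Finset.mem_range_succ_iff.1 hk)], mul_assoc _ ((-1) ^ _),
      mul_pow, mul_pow, pow_add (1 - x), ← neg_sub 1 x, neg_pow (1 - x) k, neg_pow (1 - x) m]
    ring
  have hint (k : ℕ) : IntervalIntegrable
      (fun x ↦ (1 - x) ^ (m + k) * (1 + x) ^ (n - k) * jacobiWeight α β x) volume (-1) 1 := by
    refine (intervalIntegrable_eval_mul_jacobiWeight hα hβ
      ((1 - X) ^ (m + k) * (1 + X) ^ (n - k))).congr fun x _ ↦ ?_
    simp only [eval_mul, eval_pow, eval_sub, eval_add, eval_X, eval_one]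
  simp only [hexpand]
  rw [intervalIntegral.integral_const_mul,
    intervalIntegral.integral_finsetSum fun k _ ↦ (hint k).const_mul _]
  congr 1
  refine Finset.sum_congr rfl fun k hk ↦ ?_
  rw [intervalIntegral.integral_const_mul,
    integral_one_sub_pow_mul_one_add_pow_mul_jacobiWeight hα hβ, add_assoc m,
    Nat.add_sub_of_le (Finset.mem_range_succ_iff.1 hk), Nat.cast_add, ← add_assoc,
    rpow_add_natCast two_ne_zero (α + β + 1 + m)]
  simp only [pow_add, inv_pow]
  field_simp

theorem integral_jacobiP_mul_X_sub_one_pow (hα : -1 < α) (hβ : -1 < β) {m n : ℕ} (hmn : m ≤ n) :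
    ∫ x in (-1 : ℝ)..1, (jacobiP α β n).eval x * (x - 1) ^ m * jacobiWeight α β x =
      if m = n then 2 ^ (n + α + β + 1) * beta (n + α + 1) (n + β + 1) else 0 := by
  have hcoeff : (ascPochhammer ℝ m).coeff n = if m = n then 1 else 0 := by
    split_ifs with h
    · simpa only [leadingCoeff, ascPochhammer_natDegree, h] using
        (monic_ascPochhammer ℝ n).leadingCoeff
    · exact coeff_eq_zero_of_natDegree_lt (by rw [ascPochhammer_natDegree]; omega)
  simp only [integral_jacobiP_mul_X_sub_one_pow_eq_sum hα hβ, ← Finset.mul_sum]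
  rw [Finset.sum_congr rfl fun k hk ↦ congrArg (_ * ·)
    (descPochhammer_eval_div_Gamma_mul_beta hα hβ m (Finset.mem_range_succ_iff.1 hk))]
  simp only [mul_left_comm _ (Gamma (n + β + 1) / _), ← Finset.mul_sum]
  rw [sum_neg_one_pow_mul_choose_mul_eval ((ascPochhammer_natDegree ℝ m).trans_le hmn), hcoeff]
  split_ifs with h
  · subst h
    have hsign : ((-1) ^ m * (-1) ^ m : ℝ) = 1 := by rw [← mul_pow]; simp
    rw [beta, show (m + α + 1 + (m + β + 1) : ℝ) = m + α + β + 2 + m by ring,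
      show (m + α + β + 1 : ℝ) = α + β + 1 + m by ring]
    field_simp
    linear_combination Gamma (m + α + 1) * Gamma (m + β + 1) / Gamma (m + α + β + 2 + m) * hsign
  · simp only [mul_zero]

theorem integral_jacobiP_mul_eval (hα : -1 < α) (hβ : -1 < β) {n : ℕ} {q : ℝ[X]}
    (hq : q.natDegree ≤ n) :
    ∫ x in (-1 : ℝ)..1, (jacobiP α β n).eval x * q.eval x * jacobiWeight α β x =
      (taylor 1 q).coeff n * (2 ^ (n + α + β + 1) * beta (n + α + 1) (n + β + 1)) := by
  have hexpand (x : ℝ) : (jacobiP α β n).eval x * q.eval x * jacobiWeight α β x =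
      ∑ m ∈ Finset.range (n + 1), (taylor 1 q).coeff m *
        ((jacobiP α β n).eval x * (x - 1) ^ m * jacobiWeight α β x) := by
    have hqx : q.eval x = ∑ m ∈ Finset.range (n + 1), (taylor 1 q).coeff m * (x - 1) ^ m := by
      rw [← eval_eq_sum_range' (Nat.lt_succ_of_le ((natDegree_taylor q 1).trans_le hq)),
        taylor_eval, sub_add_cancel]
    rw [hqx, Finset.mul_sum, Finset.sum_mul]
    exact Finset.sum_congr rfl fun m _ ↦ by ring
  have hint (m : ℕ) : IntervalIntegrable
      (fun x ↦ (jacobiP α β n).eval x * (x - 1) ^ m * jacobiWeight α β x) volume (-1) 1 := by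
    refine (intervalIntegrable_eval_mul_jacobiWeight hα hβ
      (jacobiP α β n * (X - 1) ^ m)).congr fun x _ ↦ ?_
    simp only [eval_mul, eval_pow, eval_sub, eval_X, eval_one]
  simp only [hexpand]
  rw [intervalIntegral.integral_finsetSum fun m _ ↦ (hint m).const_mul _, Finset.sum_range_succ,
    Finset.sum_eq_zero fun m hm ↦ ?_, zero_add, intervalIntegral.integral_const_mul,
    integral_jacobiP_mul_X_sub_one_pow hα hβ le_rfl, if_pos rfl]
  have hmn := Finset.mem_range.1 hm
  rw [intervalIntegral.integral_const_mul, integral_jacobiP_mul_X_sub_one_pow hα hβ hmn.le,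
    if_neg hmn.ne, mul_zero]

theorem jacobiNormSq_eq (hα : -1 < α) (hβ : -1 < β) {n : ℕ} (hn : n ≠ 0) :
    jacobiNormSq α β n = 2 ^ (α + β + 1) / (2 * n + (α + β + 1)) *
      (Gamma (n + α + 1) / n ! * (Gamma (n + β + 1) / n !) / (Gamma (n + (α + β) + 1) / n !)) := by
  have hn : (1 : ℝ) ≤ n := Nat.one_le_cast.2 (Nat.one_le_iff_ne_zero.2 hn)
  have hint : jacobiNormSq α β n =
      ∫ x in (-1 : ℝ)..1, (jacobiP α β n).eval x * (jacobiP α β n).eval x * jacobiWeight α β x := by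
    simp only [jacobiNormSq, jacobiWeight, sq, mul_assoc]
  have hpos : 0 < n + (α + β) + 1 := by linarith
  have hasc := Gamma_add_natCast (ne_neg_natCast_of_pos hpos) n
  have hbeta : Gamma (n + α + 1 + (n + β + 1)) =
      (2 * n + (α + β + 1)) * Gamma (n + (α + β) + 1 + n) := by
    rw [show (2 * n + (α + β + 1) : ℝ) = n + (α + β) + 1 + n by ring,
      ← Gamma_add_one (by linarith)]
    ring_nf
  have hΓα := (Gamma_pos_of_pos (show 0 < (n : ℝ) + α + 1 by linarith)).ne'
  have hΓ := (Gamma_pos_of_pos hpos).ne'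
  have hasc_ne := (ascPochhammer_pos n _ hpos).ne'
  rw [hint, integral_jacobiP_mul_eval hα hβ (natDegree_jacobiP_le α β n),
    coeff_taylor_jacobiP hα hβ, beta, hbeta, hasc, Nat.choose_self,
    show (n + α + β + 1 : ℝ) = α + β + 1 + n by ring,
    rpow_add_natCast two_ne_zero, show (α + β + 1 + n : ℝ) = n + (α + β) + 1 by ring, add_comm α n]
  field_simp
  norm_num

theorem jacobiNormSq_isEquivalent (hα : -1 < α) (hβ : -1 < β) :
    jacobiNormSq α β ~[atTop] fun n ↦ 2 ^ (α + β) * (n : ℝ)⁻¹ := by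
  have hlin : (fun n : ℕ ↦ 2 * n + (α + β + 1)) ~[atTop] fun n ↦ (2 * n : ℝ) :=
    IsEquivalent.refl.add_isLittleO (isLittleO_const_left.2 (.inr (tendsto_norm_atTop_atTop.comp
      (tendsto_natCast_atTop_atTop.const_mul_atTop two_pos))))
  have hΓ := Gamma_div_factorial_isEquivalent
  refine (((IsEquivalent.refl (u := fun _ ↦ (2 : ℝ) ^ (α + β + 1))).div hlin).mul
    (((hΓ α).mul (hΓ β)).div (hΓ (α + β)))).congr_left ?_ |>.congr_right ?_
  · filter_upwards [eventually_ne_atTop 0] with n hn using (jacobiNormSq_eq hα hβ hn).symm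
  · filter_upwards [eventually_gt_atTop 0] with n hn
    have hn : (0 : ℝ) < n := Nat.cast_pos.2 hn
    simp only [Pi.mul_apply, Pi.div_apply, rpow_add hn, rpow_add_one two_ne_zero]
    field_simp

/-! ### The kernel and the Jacobi–Sobolev polynomials -/

theorem kernK_isBigO (hα : -1 < α) (hβ : -1 < β) (j k : ℕ) :
    (fun n ↦ kernK α β j k (n - 1) 1 1) =O[atTop] fun n ↦ (n : ℝ) ^ (2 * (α + j + k + 1)) := by
  have hnorm : (fun n ↦ (jacobiNormSq α β n)⁻¹) =O[atTop] fun n ↦ (n : ℝ) := by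
    refine (jacobiNormSq_isEquivalent hα hβ).inv.isBigO.trans
      (.of_bound ((2 ^ (α + β))⁻¹) (.of_forall fun n ↦ le_of_eq ?_))
    simp [abs_of_pos (rpow_pos_of_pos two_pos (α + β)), mul_comm]
  have hterm : (fun i ↦ (derivative^[j] (jacobiP α β i)).eval 1 *
      (derivative^[k] (jacobiP α β i)).eval 1 / jacobiNormSq α β i) =O[atTop]
      fun i ↦ (i : ℝ) ^ (2 * (α + j + k) + 1) := by
    refine (((iterate_derivative_jacobiP_eval_one_isTheta hα hβ j).isBigO.mul
      (iterate_derivative_jacobiP_eval_one_isTheta hα hβ k).isBigO).mul hnorm).congr' ?_ ?_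
    · exact .of_forall fun i ↦ (div_eq_mul_inv _ _).symm
    · filter_upwards [eventually_gt_atTop 0] with i hi
      have hi : (0 : ℝ) < i := Nat.cast_pos.2 hi
      rw [← rpow_add hi, ← rpow_add_one hi.ne']
      ring_nf
  have hs : -1 < 2 * (α + j + k) + 1 := by
    linarith [j.cast_nonneg (α := ℝ), k.cast_nonneg (α := ℝ)]
  refine (isBigO_sum_range_rpow hs hterm).congr' ?_ (.of_forall fun n ↦ by ring_nf)
  filter_upwards [eventually_gt_atTop 0] with n hn
  rw [kernK, Nat.sub_add_cancel hn]

theorem iterate_derivative_kernKPoly_eval_one (α β : ℝ) (j k n : ℕ) :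
    (derivative^[k] (kernKPoly α β j n)).eval 1 = kernK α β j k n 1 1 := by
  simp only [kernKPoly, kernK, iterate_derivative_sum, iterate_derivative_C_mul, eval_finsetSum,
    eval_mul, eval_C, div_mul_eq_mul_div]

theorem iterate_derivative_sobQ_eval_one (α β : ℝ) (j k : ℕ) (Ms : ℕ → ℝ) (n : ℕ) :
    (derivative^[k] (sobQ α β j Ms n)).eval 1 = (derivative^[k] (jacobiP α β n)).eval 1 -
      Ms n * (derivative^[j] (jacobiP α β n)).eval 1 / (1 + Ms n * kernK α β j j (n - 1) 1 1) *
        kernK α β j k (n - 1) 1 1 := by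
  rw [sobQ, iterate_derivative_sub, iterate_derivative_C_mul, eval_sub, eval_mul, eval_C,
    iterate_derivative_kernKPoly_eval_one]

theorem iterate_derivative_jacobiP_mul_kernK_div_isBigO (hα : -1 < α) (hβ : -1 < β) (j k : ℕ) :
    (fun n ↦ (derivative^[j] (jacobiP α β n)).eval 1 * kernK α β j k (n - 1) 1 1 /
      (derivative^[k] (jacobiP α β n)).eval 1) =O[atTop]
      fun n ↦ (n : ℝ) ^ (2 * (α + 2 * j + 1)) := by
  have hP := iterate_derivative_jacobiP_eval_one_isTheta hα hβ
  refine ((((hP j).isBigO.mul (kernK_isBigO hα hβ j k)).mul (hP k).inv.isBigO).congr'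
    (.of_forall fun n ↦ (div_eq_mul_inv _ _).symm) ?_)
  filter_upwards [eventually_gt_atTop 0] with n hn
  have hn : (0 : ℝ) < n := Nat.cast_pos.2 hn
  rw [← rpow_neg hn.le, ← rpow_add hn, ← rpow_add hn]
  ring_nf

theorem sobQ_deriv_ratio_large_gamma_general (hα : -1 < α) (hβ : -1 < β) (j : ℕ) {Ms : ℕ → ℝ}
    (hMs : Tendsto (fun n : ℕ ↦ Ms n * (n : ℝ) ^ (2 * (α + 2 * j + 1))) atTop (𝓝 0)) (k : ℕ) :
    Tendsto (fun n ↦ (derivative^[k] (sobQ α β j Ms n)).eval 1 /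
      (derivative^[k] (jacobiP α β n)).eval 1) atTop (𝓝 1) := by
  have hsmall {f : ℕ → ℝ} (hf : f =O[atTop] fun n ↦ (n : ℝ) ^ (2 * (α + 2 * j + 1))) :
      Tendsto (fun n ↦ Ms n * f n) atTop (𝓝 0) :=
    ((isBigO_refl Ms atTop).mul hf).trans_tendsto hMs
  have hnum := hsmall (iterate_derivative_jacobiP_mul_kernK_div_isBigO hα hβ j k)
  have hden := hsmall ((kernK_isBigO hα hβ j j).congr_right fun n ↦ by ring_nf)
  have hlim := (hnum.div (hden.const_add 1) (by norm_num)).const_sub 1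
  rw [zero_div, sub_zero] at hlim
  refine hlim.congr' ?_
  filter_upwards [(iterate_derivative_jacobiP_eval_one_isTheta hα hβ k).eq_zero_iff,
    eventually_gt_atTop 0] with n hzero hn
  have hne : (derivative^[k] (jacobiP α β n)).eval 1 ≠ 0 :=
    hzero.not.2 (rpow_pos_of_pos (Nat.cast_pos.2 hn) _).ne'
  rw [iterate_derivative_sobQ_eval_one, sub_div, div_self hne]
  simp only [Pi.div_apply]
  ring

end

/-- limit of `Q_n^{(k)}(1)/(P_n^{(α,β)})^{(k)}(1)` when `γ > 2(α+2j+1)`. -/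
theorem sobQ_deriv_ratio_large_gamma (α β : ℝ) (hα : -1 < α) (hβ : -1 < β) (j : ℕ)
    (γ M : ℝ) (hM : 0 < M) (Ms : ℕ → ℝ) (hMs : ∀ n, 0 ≤ Ms n)
    (hlim : Filter.Tendsto (fun n : ℕ => Ms n * (n : ℝ) ^ γ) Filter.atTop (nhds M))
    (hγ : 2 * (α + 2 * j + 1) < γ) (k : ℕ) :
    Filter.Tendsto
      (fun n : ℕ => (Polynomial.derivative^[k] (sobQ α β j Ms n)).eval 1 /
        (Polynomial.derivative^[k] (jacobiP α β n)).eval 1)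
      Filter.atTop (nhds 1) :=
  sobQ_deriv_ratio_large_gamma_general hα hβ j (tendsto_mul_rpow_zero_of_lt hlim hγ) k
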